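/- arXiv:2506.11700 — 7 statements merged into one kernel-verified Lean document; each statement's English description precedes it below -/
import Mathlib

section
/- Let X₁, ..., Xₙ be finitely many distinct points of Euclidean space ℝ^N (with the Euclidean norm). Then the n × n real matrix ζ with entries ζᵢⱼ = exp(−‖Xᵢ − Xⱼ‖) is a positive definite matrix. -/
/-!
Write `K(x, y) = ‖x‖ + ‖y‖ - ‖x - y‖`. Since
`exp (-‖x - y‖) = exp (-‖x‖) * exp K(x, y) * exp (-‖y‖)`, it is enough that the entrywise
exponential of `K` is positive definite.

* `K` is positive semidefinite: up to a positive constant, `‖x‖` is the integral over `s` of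
  `(1 - exp (-s² ‖x‖²)) / s²`, and for `ψ x = 1 - exp (-‖x‖²)` the kernel
  `ψ x + ψ y - ψ (x - y)` equals
  `ψ x * ψ y + exp (-‖x‖²) * exp (-‖y‖²) * (exp (2 ⟪x, y⟫) - 1)`, which is positive semidefinite by
  the Schur product theorem.
* If `v` is a null vector of the entrywise exponential of a positive semidefinite matrix `A`, then
  it is a null vector of every entrywise power of `A`, hence of every entrywise function of `A`.
  Let `m` maximize `A i i` among the indices with `v i ≠ 0`. If `2 * A m i ≠ A m m + A i i` for
  `i ≠ m`, then `A m i < A m m` for all other such `i`, so the indicator function of `A m m` gives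
  `v m = 0`.
-/

open Matrix MeasureTheory
open scoped ComplexOrder Nat

section PositiveSemidefinite

variable {ι 𝕜 : Type*} [RCLike 𝕜]

-- `Matrix.posSemidef_gram` covers only finite index types.
theorem posSemidef_gram_kernel {E : Type*} [SeminormedAddCommGroup E]
    [InnerProductSpace 𝕜 E] (v : ι → E) : (gram 𝕜 v).PosSemidef := by
  refine ⟨isHermitian_gram 𝕜 v, fun x ↦ ?_⟩
  have hquad : (x.sum fun i xi ↦ x.sum fun j xj ↦ star xi * gram 𝕜 v i j * xj) =
      inner 𝕜 (x.sum fun i xi ↦ xi • v i) (x.sum fun i xi ↦ xi • v i) := by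
    rw [Finsupp.sum_inner]
    refine Finsupp.sum_congr fun i _ ↦ ?_
    rw [Finsupp.inner_sum]
    refine Finsupp.sum_congr fun j _ ↦ ?_
    rw [inner_smul_left, inner_smul_right, gram_apply, RCLike.star_def]
    ring
  rw [hquad, inner_self_eq_norm_sq_to_K]
  exact_mod_cast sq_nonneg ‖x.sum fun i xi ↦ xi • v i‖

theorem posSemidef_map_pow {A : Matrix ι ι 𝕜} (hA : A.PosSemidef) (k : ℕ) :
    (A.map (· ^ k)).PosSemidef := by
  induction k with
  | zero =>
    convert posSemidef_gram_kernel (𝕜 := 𝕜) fun _ : ι ↦ (1 : 𝕜) using 1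
    ext i j
    simp
  | succ k ih =>
    convert ih.hadamard hA using 1
    ext i j
    exact pow_succ (A i j) k

theorem isClosed_setOf_posSemidef : IsClosed {A : Matrix ι ι 𝕜 | A.PosSemidef} := by
  simp only [PosSemidef, Set.ofPred_and, Set.ofPred_forall]
  refine .inter (isClosed_eq (by fun_prop) continuous_id) (isClosed_iInter fun x ↦ ?_)
  simp only [Finsupp.sum]
  exact isClosed_le continuous_const (by fun_prop)

open scoped MatrixOrder in
theorem orderClosedTopology_matrix : OrderClosedTopology (Matrix ι ι 𝕜) where
  isClosed_le' := (isClosed_setOf_posSemidef (ι := ι) (𝕜 := 𝕜)).preimage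
    (f := fun p : Matrix ι ι 𝕜 × Matrix ι ι 𝕜 ↦ p.2 - p.1) (by fun_prop)

open scoped MatrixOrder in
theorem posSemidef_sub_of_hasSum {κ : Type*} {B : κ → Matrix ι ι 𝕜} {A : Matrix ι ι 𝕜}
    (hsum : HasSum B A) (hB : ∀ k, (B k).PosSemidef) (k : κ) : (A - B k).PosSemidef :=
  haveI := orderClosedTopology_matrix (ι := ι) (𝕜 := 𝕜)
  le_hasSum hsum k fun l _ ↦ (hB l).nonneg

theorem posSemidef_of_integral {α : Type*} [MeasurableSpace α] {μ : Measure α}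
    {A : α → Matrix ι ι 𝕜} (hA : ∀ᵐ a ∂μ, (A a).PosSemidef)
    (hint : ∀ i j, Integrable (fun a ↦ A a i j) μ) :
    (Matrix.of fun i j ↦ ∫ a, A a i j ∂μ).PosSemidef := by
  refine ⟨?_, fun x ↦ ?_⟩
  · ext i j
    simp only [conjTranspose_apply, of_apply, RCLike.star_def, ← integral_conj]
    exact integral_congr_ae (hA.mono fun a ha ↦ ha.isHermitian.apply i j)
  · have hterm (i j : ι) : Integrable (fun a ↦ star (x i) * A a i j * x j) μ :=
      ((hint i j).const_mul _).mul_const _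
    have hquad : (x.sum fun i xi ↦ x.sum fun j xj ↦ star xi * (∫ a, A a i j ∂μ) * xj) =
        ∫ a, x.sum fun i xi ↦ x.sum fun j xj ↦ star xi * A a i j * xj ∂μ := by
      simp only [Finsupp.sum]
      rw [integral_finsetSum _ fun i _ ↦ integrable_finsetSum _ fun j _ ↦ hterm i j]
      refine Finset.sum_congr rfl fun i _ ↦ ?_
      rw [integral_finsetSum _ fun j _ ↦ hterm i j]
      simp only [integral_mul_const, integral_const_mul]
    simp only [of_apply, hquad]
    exact integral_nonneg_of_ae (hA.mono fun a ha ↦ ha.2 x)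

end PositiveSemidefinite

section PositiveDefinite

variable {ι R : Type*} [Ring R] [PartialOrder R] [StarRing R]

theorem posDef_of_forall_finset_submatrix {M : Matrix ι ι R}
    (hM : ∀ s : Finset ι, (M.submatrix ((↑) : s → ι) (↑)).PosDef) : M.PosDef := by
  classical
  refine ⟨?_, fun x hx ↦ ?_⟩
  · ext i j
    exact (hM {i, j}).isHermitian.apply ⟨i, by simp⟩ ⟨j, by simp⟩
  · have hx' : x.subtypeDomain (· ∈ x.support) ≠ 0 := by
      rwa [Ne, Finsupp.subtypeDomain_eq_zero_iff fun i hi ↦ hi]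
    simpa [Finsupp.sum, ← Finset.sum_attach x.support, ← Finset.subtype_mem_eq_attach,
      ← Finsupp.subtypeDomain_apply, ← Finsupp.support_subtypeDomain] using (hM x.support).2 hx'

theorem posDef_star_mul_mul [NoZeroDivisors R] {M : Matrix ι ι R} (hM : M.PosDef) {d : ι → R}
    (hd : ∀ i, d i ≠ 0) : (Matrix.of fun i j ↦ star (d i) * M i j * d j).PosDef := by
  classical
  refine posDef_of_forall_finset_submatrix fun s ↦ ?_
  have hinj : Function.Injective (diagonal fun i : s ↦ d i).mulVec := fun v w hvw ↦ by
    ext i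
    simpa [mulVec_diagonal, hd] using congrFun hvw i
  convert (hM.submatrix Subtype.val_injective).conjTranspose_mul_mul_same hinj
  ext i j
  simp [diagonal_conjTranspose, diagonal_mul, mul_diagonal]

end PositiveDefinite

section EntrywiseExponential

variable {ι : Type*}

theorem hasSum_map_exp (A : Matrix ι ι ℝ) :
    HasSum (fun k : ℕ ↦ (k ! : ℝ)⁻¹ • A.map (· ^ k)) (A.map Real.exp) := by
  refine Pi.hasSum.2 fun i ↦ Pi.hasSum.2 fun j ↦ ?_
  simpa [Real.exp_eq_exp_ℝ, div_eq_inv_mul] using NormedSpace.expSeries_div_hasSum_exp (A i j)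

theorem posSemidef_map_exp_sub_map_pow {A : Matrix ι ι ℝ} (hA : A.PosSemidef) (k : ℕ) :
    (A.map Real.exp - (k ! : ℝ)⁻¹ • A.map (· ^ k)).PosSemidef :=
  posSemidef_sub_of_hasSum (hasSum_map_exp A)
    (fun l ↦ (posSemidef_map_pow hA l).smul (by positivity)) k

theorem posSemidef_map_exp_sub_one {A : Matrix ι ι ℝ} (hA : A.PosSemidef) :
    (A.map fun a ↦ Real.exp a - 1).PosSemidef := by
  convert posSemidef_map_exp_sub_map_pow hA 0 using 1
  ext i j
  simp

theorem map_pow_mulVec_eq_zero_of_map_exp [Fintype ι] {A : Matrix ι ι ℝ} (hA : A.PosSemidef)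
    {v : ι → ℝ} (hv : v ⬝ᵥ A.map Real.exp *ᵥ v ≤ 0) (k : ℕ) : A.map (· ^ k) *ᵥ v = 0 := by
  have hpow := posSemidef_map_pow hA k
  have hrest := (posSemidef_map_exp_sub_map_pow hA k).dotProduct_mulVec_nonneg v
  rw [sub_mulVec, smul_mulVec, dotProduct_sub, dotProduct_smul, star_trivial, smul_eq_mul] at hrest
  have hquad : v ⬝ᵥ A.map (· ^ k) *ᵥ v ≤ 0 :=
    nonpos_of_mul_nonpos_right (by linarith) (by positivity : 0 < (k ! : ℝ)⁻¹)
  exact (hpow.dotProduct_mulVec_zero_iff v).1 (hquad.antisymm (hpow.dotProduct_mulVec_nonneg v))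

theorem sum_mul_comp_eq_zero_of_sum_mul_pow_eq_zero {F : Type*} [Field F] {s : Finset ι}
    {a v : ι → F} (h : ∀ k : ℕ, ∑ i ∈ s, a i ^ k * v i = 0) (f : F → F) :
    ∑ i ∈ s, f (a i) * v i = 0 := by
  classical
  let p := Lagrange.interpolate (s.image a) id f
  have hp : ∀ i ∈ s, f (a i) = p.eval (a i) := fun i hi ↦
    (Lagrange.eval_interpolate_at_node f Function.injective_id.injOn
      (Finset.mem_image_of_mem a hi)).symm
  calc ∑ i ∈ s, f (a i) * v i
      = ∑ i ∈ s, ∑ k ∈ Finset.range (p.natDegree + 1), p.coeff k * (a i ^ k * v i) :=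
        Finset.sum_congr rfl fun i hi ↦ by
          simp only [hp i hi, Polynomial.eval_eq_sum_range, Finset.sum_mul, mul_assoc]
    _ = 0 := by
        rw [Finset.sum_comm]
        simp only [← Finset.mul_sum, h, mul_zero, Finset.sum_const_zero]

theorem map_mulVec_eq_zero_of_map_exp [Fintype ι] {A : Matrix ι ι ℝ} (hA : A.PosSemidef)
    {v : ι → ℝ} (hv : v ⬝ᵥ A.map Real.exp *ᵥ v ≤ 0) (f : ℝ → ℝ) : A.map f *ᵥ v = 0 :=
  funext fun i ↦ sum_mul_comp_eq_zero_of_sum_mul_pow_eq_zero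
    (fun k ↦ congrFun (map_pow_mulVec_eq_zero_of_map_exp hA hv k) i) f

theorem two_mul_le_add_diag_of_posSemidef {A : Matrix ι ι ℝ} (hA : A.PosSemidef) (i j : ι) :
    2 * A i j ≤ A i i + A j j := by
  have hsymm : A j i = A i j := hA.isHermitian.apply i j
  have hquad := (hA.submatrix ![i, j]).dotProduct_mulVec_nonneg ![1, -1]
  simp only [dotProduct, mulVec, Fin.sum_univ_two, submatrix_apply, star_trivial, cons_val_zero,
    cons_val_one, hsymm] at hquad
  linarith

theorem posDef_map_exp {A : Matrix ι ι ℝ} (hA : A.PosSemidef)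
    (hsep : Pairwise fun i j ↦ 2 * A i j ≠ A i i + A j j) : (A.map Real.exp).PosDef := by
  classical
  refine posDef_of_forall_finset_submatrix fun s ↦ ?_
  have hB : (A.submatrix ((↑) : s → ι) (↑)).PosSemidef := hA.submatrix _
  have hherm : (A.map Real.exp).IsHermitian := hA.isHermitian.map _ fun _ ↦ rfl
  refine .of_dotProduct_mulVec_pos (hherm.submatrix _) fun v hv ↦ ?_
  by_contra! hle
  obtain ⟨i₀, hi₀⟩ := Function.ne_iff.1 hv
  obtain ⟨m, hm, hmax⟩ := Finset.exists_max_image ({i | v i ≠ 0} : Finset s)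
    (fun i ↦ A i i) ⟨i₀, by simpa using hi₀⟩
  have hisolated (i : s) (him : i ≠ m) : (Pi.single (A m m) 1 : ℝ → ℝ) (A m i) * v i = 0 := by
    by_cases hvi : v i = 0
    · rw [hvi, mul_zero]
    · have hdiag : A i i ≤ A m m := hmax i (by simpa using hvi)
      have hlt : 2 * A m i < A m m + A i i := (two_mul_le_add_diag_of_posSemidef hA m i).lt_of_ne
        (hsep (Subtype.coe_injective.ne him.symm))
      rw [Pi.single_eq_of_ne (by linarith), zero_mul]
  have hrow : ∑ i : s, (Pi.single (A m m) 1 : ℝ → ℝ) (A m i) * v i = 0 :=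
    congrFun (map_mulVec_eq_zero_of_map_exp hB hle (Pi.single (A m m) 1)) m
  rw [Finset.sum_eq_single m (fun i _ ↦ hisolated i) (by simp), Pi.single_eq_same, one_mul] at hrow
  exact (Finset.mem_filter.1 hm).2 hrow

end EntrywiseExponential

/-- The kernel `(x, y) ↦ ψ x + ψ y - ψ (x - y)`. For a process with stationary increments started
at `0` whose increments have variance `2 * ψ`, it is the covariance kernel; when `ψ 0 = 0`, its
positive semidefiniteness expresses that `ψ` is conditionally negative definite. -/
def incrementKernel {E : Type*} [Sub E] (ψ : E → ℝ) : Matrix E E ℝ :=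
  Matrix.of fun x y ↦ ψ x + ψ y - ψ (x - y)

section IncrementKernel

variable {E : Type*}

theorem posSemidef_incrementKernel_integral [Sub E] {α : Type*} [MeasurableSpace α]
    {μ : Measure α} {ψ : α → E → ℝ} (hψ : ∀ᵐ a ∂μ, (incrementKernel (ψ a)).PosSemidef)
    (hint : ∀ x, Integrable (fun a ↦ ψ a x) μ) :
    (incrementKernel fun x ↦ ∫ a, ψ a x ∂μ).PosSemidef := by
  have hadd (x y : E) : Integrable (fun a ↦ ψ a x + ψ a y) μ := (hint x).add (hint y)
  have hpos : (Matrix.of fun x y ↦ ∫ a, incrementKernel (ψ a) x y ∂μ).PosSemidef :=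
    posSemidef_of_integral hψ fun x y ↦ (hadd x y).sub (hint (x - y))
  convert hpos using 1
  ext x y
  simp only [incrementKernel, of_apply]
  rw [integral_sub (hadd x y) (hint (x - y)), integral_add (hint x) (hint y)]

theorem posDef_exp_neg_sub_of_incrementKernel [AddGroup E] {ψ : E → ℝ}
    (hψ : (incrementKernel ψ).PosSemidef) (hne : ∀ x ≠ 0, ψ x ≠ ψ 0) :
    (Matrix.of fun x y ↦ Real.exp (-ψ (x - y))).PosDef := by
  have hsep : Pairwise fun x y ↦
      2 * incrementKernel ψ x y ≠ incrementKernel ψ x x + incrementKernel ψ y y := by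
    intro x y hxy heq
    simp only [incrementKernel, of_apply, sub_self] at heq
    exact hne (x - y) (sub_ne_zero.2 hxy) (by linarith)
  convert posDef_star_mul_mul (posDef_map_exp hψ hsep) fun x ↦ (Real.exp_pos (-ψ x)).ne' using 1
  ext x y
  simp only [incrementKernel, of_apply, map_apply, star_trivial, ← Real.exp_add]
  congr 1
  ring

end IncrementKernel

section Norm

variable {E : Type*} [SeminormedAddCommGroup E] [InnerProductSpace ℝ E]

theorem posSemidef_incrementKernel_one_sub_gaussian :
    (incrementKernel fun x : E ↦ 1 - Real.exp (-‖x‖ ^ 2)).PosSemidef := by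
  have hsplit (x y : E) : Real.exp (-‖x - y‖ ^ 2) =
      Real.exp (-‖x‖ ^ 2) * Real.exp (-‖y‖ ^ 2) * Real.exp (2 * inner ℝ x y) := by
    rw [norm_sub_sq_real, ← Real.exp_add, ← Real.exp_add]
    congr 1
    ring
  have hkernel : (incrementKernel fun x : E ↦ 1 - Real.exp (-‖x‖ ^ 2)) =
      gram ℝ (fun x : E ↦ 1 - Real.exp (-‖x‖ ^ 2)) +
        gram ℝ (fun x : E ↦ Real.exp (-‖x‖ ^ 2)) ⊙
          ((2 : ℝ) • gram ℝ (id : E → E)).map fun a ↦ Real.exp a - 1 := by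
    ext x y
    simp only [incrementKernel, hsplit, of_apply, Matrix.add_apply, gram_apply,
      RCLike.inner_apply, conj_trivial, hadamard_apply, map_apply, Matrix.smul_apply, id_eq,
      smul_eq_mul]
    ring
  rw [hkernel]
  exact (posSemidef_gram_kernel _).add ((posSemidef_gram_kernel _).hadamard
    (posSemidef_map_exp_sub_one ((posSemidef_gram_kernel _).smul zero_le_two)))

/-- The integrand in the representation of `|r|`, up to a constant, as
`∫ (1 - exp (-(r * s) ^ 2)) / s ^ 2` over the real line. Division by zero gives it the value `0`
at `s = 0`. -/
noncomputable def absIntegrand (r s : ℝ) : ℝ := (1 - Real.exp (-(r * s) ^ 2)) / s ^ 2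

theorem absIntegrand_nonneg (r s : ℝ) : 0 ≤ absIntegrand r s :=
  div_nonneg (sub_nonneg.2 (Real.exp_le_one_iff.2 (neg_nonpos.2 (sq_nonneg _)))) (sq_nonneg s)

theorem absIntegrand_eq (r s : ℝ) : absIntegrand r s = r ^ 2 * absIntegrand 1 (r * s) := by
  rcases eq_or_ne r 0 with rfl | hr
  · simp [absIntegrand]
  · simp only [absIntegrand]
    rw [one_mul, mul_pow, mul_div_assoc', mul_div_mul_left _ _ (pow_ne_zero 2 hr)]

theorem integrable_absIntegrand_one : Integrable (absIntegrand 1) := by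
  refine (integrable_inv_one_add_sq.const_mul 2).mono' ?_ (.of_forall fun s ↦ ?_)
  · unfold absIntegrand
    exact Measurable.aestronglyMeasurable (by fun_prop)
  · rw [Real.norm_of_nonneg (absIntegrand_nonneg 1 s), absIntegrand]
    rcases eq_or_ne s 0 with rfl | hs
    · simp
    · -- `1 - exp (-s²)` is at most `s²` and at most `1`; the sum of both bounds is used.
      rw [← div_eq_mul_inv, div_le_div_iff₀ (by positivity) (by positivity)]
      nlinarith [Real.add_one_le_exp (-(1 * s) ^ 2), Real.exp_pos (-(1 * s) ^ 2)]

theorem integrable_absIntegrand (r : ℝ) : Integrable (absIntegrand r) := by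
  simp only [funext (absIntegrand_eq r)]
  rcases eq_or_ne r 0 with rfl | hr
  · simp
  · exact (integrable_absIntegrand_one.comp_mul_left' hr).const_mul _

theorem integral_absIntegrand (r : ℝ) : ∫ s, absIntegrand r s = |r| * ∫ s, absIntegrand 1 s := by
  simp only [absIntegrand_eq r]
  rw [integral_const_mul, Measure.integral_comp_mul_left, smul_eq_mul, ← mul_assoc, abs_inv,
    ← sq_abs, pow_two, mul_self_mul_inv]

theorem integral_absIntegrand_one_pos : 0 < ∫ s, absIntegrand 1 s := by
  rw [integral_pos_iff_support_of_nonneg (absIntegrand_nonneg 1) integrable_absIntegrand_one]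
  have hsubset : Set.Ioo (0 : ℝ) 1 ⊆ Function.support (absIntegrand 1) := fun s hs ↦ by
    have hs_sq : 0 < s ^ 2 := pow_pos hs.1 2
    have hexp : Real.exp (-(1 * s) ^ 2) < 1 := Real.exp_lt_one_iff.2 (by simpa using hs_sq)
    exact (div_pos (sub_pos.2 hexp) hs_sq).ne'
  exact lt_of_lt_of_le (by simp) (measure_mono hsubset)

theorem posSemidef_incrementKernel_absIntegrand (s : ℝ) :
    (incrementKernel fun x : E ↦ absIntegrand ‖x‖ s).PosSemidef := by
  have hscale (z : E) :
      absIntegrand ‖z‖ s = (s ^ 2)⁻¹ * (1 - Real.exp (-‖s • z‖ ^ 2)) := by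
    rw [absIntegrand, norm_smul, mul_comm ‖s‖, mul_pow, mul_pow, Real.norm_eq_abs, sq_abs,
      div_eq_inv_mul]
  convert (posSemidef_incrementKernel_one_sub_gaussian.submatrix fun x : E ↦ s • x).smul
    (by positivity : 0 ≤ (s ^ 2)⁻¹) using 1
  ext x y
  simp only [incrementKernel, hscale, smul_sub, of_apply, Matrix.smul_apply, submatrix_apply,
    smul_eq_mul]
  ring

theorem posSemidef_incrementKernel_norm : (incrementKernel (norm : E → ℝ)).PosSemidef := by
  have hintegral := posSemidef_incrementKernel_integral
    (.of_forall (posSemidef_incrementKernel_absIntegrand (E := E)))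
    fun x ↦ integrable_absIntegrand ‖x‖
  have hpos := integral_absIntegrand_one_pos
  convert hintegral.smul (inv_nonneg.2 hpos.le) using 1
  ext x y
  simp only [incrementKernel, integral_absIntegrand ‖_‖, abs_norm, Matrix.smul_apply, of_apply,
    smul_eq_mul]
  field_simp

end Norm

theorem exp_neg_dist_matrix_posDef_general (E : Type*) [NormedAddCommGroup E]
    [InnerProductSpace ℝ E] : (Matrix.of fun x y : E ↦ Real.exp (-‖x - y‖)).PosDef :=
  posDef_exp_neg_sub_of_incrementKernel posSemidef_incrementKernel_norm fun x hx ↦ by simpa using hx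

/-- For finitely many distinct points `X 1, ..., X n` of Euclidean space `ℝ^N`,
the `n × n` matrix with entries `exp (-‖X i - X j‖)` is positive definite. -/
theorem exp_neg_dist_matrix_posDef (n N : ℕ) (X : Fin n → EuclideanSpace ℝ (Fin N))
    (hX : Function.Injective X) :
    (Matrix.of fun i j : Fin n => Real.exp (-‖X i - X j‖)).PosDef :=
  (exp_neg_dist_matrix_posDef_general (EuclideanSpace ℝ (Fin N))).submatrix hX
end

section
/- Let X be a finite set, let Φ : X → ℝ^N be an injective map, and define d(x,y) = ‖Φ(x) − Φ(y)‖ (the Euclidean norm of the difference), so that (X,d) is a finite metric space. Then (X,d) is positive definite, i.e. the similarity matrix ζ_X with entries ζ_X(x,y) = exp(−d(x,y)) is a positive definite matrix. In particular, any finite metric space endowed with a diffusion distance (which by construction isometrically embeds into Euclidean space) is positive definite. -/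
/-!
The squared distance `‖x - y‖ ^ 2 = ‖x‖ ^ 2 + ‖y‖ ^ 2 - 2 ⟪x, y⟫` is conditionally negative
definite. If `ψ` is conditionally negative definite, testing it on `c - (∑ x, c x) δ_o` shows that
`ψ x o + ψ o y - ψ x y - ψ o o` is positive semidefinite; so is its entrywise exponential, by Schur
products, and hence so is `exp (-ψ)`. If moreover `0 ≤ ψ`, the Laplace transform
`(t + ψ)⁻¹ = ∫ exp (-u (t + ψ)) du` is positive semidefinite, and integrating
`ψ ^ p ∝ ∫ t ^ p (t⁻¹ - (t + ψ)⁻¹) dt` shows that `ψ ^ p` is conditionally negative definite for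
`0 < p < 1`. The case `p = 1 / 2` makes `‖x - y‖` conditionally negative definite, and therefore
`exp (-‖x - y‖)` positive semidefinite.

This kernel is definite on all of `V` because, by Cauchy–Schwarz, a null vector `c` would satisfy
`∑ x, c x * exp (-‖x - y‖) = 0` for every `y : V`, while at a point `x` only the term of `x` fails
to be differentiable in `y`.
-/

open MeasureTheory Filter Topology Set
open scoped Matrix

section KernelForm

variable {X : Type*}

/-- The bilinear form `(c, d) ↦ ∑ x, ∑ y, c x * K x y * d y` of a real kernel `K` on a possibly
infinite set `X`, acting on finitely supported coefficients. -/
noncomputable def kernelForm (K : Matrix X X ℝ) : LinearMap.BilinForm ℝ (X →₀ ℝ) :=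
  Finsupp.linearCombination ℝ fun x ↦ Finsupp.linearCombination ℝ (K x)

theorem kernelForm_apply (K : Matrix X X ℝ) (c d : X →₀ ℝ) :
    kernelForm K c d = c.sum fun x a ↦ d.sum fun y b ↦ a * K x y * b := by
  simp only [kernelForm, Finsupp.linearCombination_apply, Finsupp.sum, LinearMap.sum_apply,
    LinearMap.smul_apply, smul_eq_mul, Finset.mul_sum]
  exact Finset.sum_congr rfl fun _ _ ↦ Finset.sum_congr rfl fun _ _ ↦ by ring

theorem kernelForm_single_right (K : Matrix X X ℝ) (c : X →₀ ℝ) (y : X) (b : ℝ) :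
    kernelForm K c (Finsupp.single y b) = (c.sum fun x a ↦ a * K x y) * b := by
  simp only [kernelForm_apply, Finsupp.sum_mul, mul_zero, Finsupp.sum_single_index]

theorem kernelForm_add (K L : Matrix X X ℝ) (c d : X →₀ ℝ) :
    kernelForm (K + L) c d = kernelForm K c d + kernelForm L c d := by
  simp only [kernelForm_apply, Matrix.add_apply, mul_add, add_mul, Finsupp.sum_add]

theorem kernelForm_smul (s : ℝ) (K : Matrix X X ℝ) (c d : X →₀ ℝ) :
    kernelForm (s • K) c d = s * kernelForm K c d := by
  simp only [kernelForm_apply, Matrix.smul_apply, smul_eq_mul, Finsupp.mul_sum, mul_assoc,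
    mul_left_comm s]

theorem kernelForm_sub (K L : Matrix X X ℝ) (c d : X →₀ ℝ) :
    kernelForm (K - L) c d = kernelForm K c d - kernelForm L c d := by
  simp only [kernelForm_apply, Matrix.sub_apply, mul_sub, sub_mul, Finsupp.sum_sub]

theorem kernelForm_vecMulVec (f g : X → ℝ) (c d : X →₀ ℝ) :
    kernelForm (Matrix.vecMulVec f g) c d =
      (c.sum fun x a ↦ a * f x) * d.sum fun y b ↦ b * g y := by
  simp only [kernelForm_apply, Matrix.vecMulVec_apply, Finsupp.sum, Finset.sum_mul_sum]
  exact Finset.sum_congr rfl fun _ _ ↦ Finset.sum_congr rfl fun _ _ ↦ by ring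

theorem kernelForm_gram {V : Type*} [SeminormedAddCommGroup V] [InnerProductSpace ℝ V]
    (v : X → V) (c d : X →₀ ℝ) : kernelForm (Matrix.gram ℝ v) c d =
      inner ℝ (Finsupp.linearCombination ℝ v c) (Finsupp.linearCombination ℝ v d) := by
  simp only [kernelForm_apply, Finsupp.linearCombination_apply, Finsupp.sum, sum_inner, inner_sum,
    Matrix.gram_apply, real_inner_smul_left, real_inner_smul_right]
  rw [Finset.sum_comm]
  exact Finset.sum_congr rfl fun _ _ ↦ Finset.sum_congr rfl fun _ _ ↦ by ring

theorem kernelForm_comm {K : Matrix X X ℝ} (hK : K.IsHermitian) (c d : X →₀ ℝ) :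
    kernelForm K c d = kernelForm K d c := by
  simp only [kernelForm_apply, Finsupp.sum]
  rw [Finset.sum_comm]
  refine Finset.sum_congr rfl fun y _ ↦ Finset.sum_congr rfl fun x _ ↦ ?_
  rw [← hK.apply x y, star_trivial]
  ring

theorem kernelForm_integral {α : Type*} [MeasurableSpace α] {μ : Measure α}
    {K : α → Matrix X X ℝ} (hK : ∀ x y, Integrable (fun t ↦ K t x y) μ) (c d : X →₀ ℝ) :
    kernelForm (.of fun x y ↦ ∫ t, K t x y ∂μ) c d = ∫ t, kernelForm (K t) c d ∂μ := by
  have hint : ∀ x y, Integrable (fun t ↦ c x * K t x y * d y) μ := fun x y ↦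
    ((hK x y).const_mul _).mul_const _
  simp only [kernelForm_apply, Finsupp.sum, Matrix.of_apply]
  rw [integral_finsetSum _ fun x _ ↦ integrable_finsetSum _ fun y _ ↦ hint x y]
  refine Finset.sum_congr rfl fun x _ ↦ ?_
  rw [integral_finsetSum _ fun y _ ↦ hint x y]
  refine Finset.sum_congr rfl fun y _ ↦ ?_
  rw [integral_mul_const, integral_const_mul]

theorem posSemidef_iff_kernelForm_nonneg {K : Matrix X X ℝ} :
    K.PosSemidef ↔ K.IsHermitian ∧ ∀ c, 0 ≤ kernelForm K c c := by
  simp only [Matrix.PosSemidef, kernelForm_apply, star_trivial]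

theorem posDef_iff_kernelForm_pos {K : Matrix X X ℝ} :
    K.PosDef ↔ K.IsHermitian ∧ ∀ c, c ≠ 0 → 0 < kernelForm K c c := by
  simp only [Matrix.PosDef, kernelForm_apply, star_trivial]

theorem posDef_of_posSemidef_of_linearIndependent {K : Matrix X X ℝ} (hK : K.PosSemidef)
    (hli : LinearIndependent ℝ K.row) : K.PosDef := by
  obtain ⟨hsymm, hnonneg⟩ := posSemidef_iff_kernelForm_nonneg.1 hK
  refine posDef_iff_kernelForm_pos.2 ⟨hsymm, fun c hc ↦ (hnonneg c).lt_of_ne' fun h0 ↦ hc ?_⟩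
  refine linearIndependent_iff.1 hli c (funext fun y ↦ ?_)
  have hCS := (kernelForm K).apply_sq_le_of_symm hnonneg ⟨kernelForm_comm hsymm⟩ c
    (Finsupp.single y 1)
  rw [h0, zero_mul, sq_nonpos_iff] at hCS
  simpa only [kernelForm_single_right, mul_one, Finsupp.linearCombination_apply, Finsupp.sum,
    Finset.sum_apply, Pi.smul_apply, Pi.zero_apply, smul_eq_mul, Matrix.row_apply] using hCS

end KernelForm

section PosSemidef

variable {X : Type*}

theorem posSemidef_of_tendsto {ι : Type*} {l : Filter ι} [l.NeBot] {K : ι → Matrix X X ℝ}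
    {L : Matrix X X ℝ} (hK : ∀ᶠ i in l, (K i).PosSemidef)
    (hL : ∀ x y, Tendsto (fun i ↦ K i x y) l (𝓝 (L x y))) : L.PosSemidef := by
  refine posSemidef_iff_kernelForm_nonneg.2 ⟨?_, fun c ↦ ?_⟩
  · ext x y
    refine tendsto_nhds_unique (hL y x) ((hL x y).congr' ?_)
    exact hK.mono fun i hi ↦ hi.isHermitian.apply y x
  · have hform : Tendsto (fun i ↦ kernelForm (K i) c c) l (𝓝 (kernelForm L c c)) := by
      simp only [kernelForm_apply]
      exact tendsto_finsetSum _ fun x _ ↦ tendsto_finsetSum _ fun y _ ↦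
        ((hL x y).const_mul _).mul_const _
    exact ge_of_tendsto hform (hK.mono fun i hi ↦ (posSemidef_iff_kernelForm_nonneg.1 hi).2 c)

theorem posSemidef_integral {α : Type*} [MeasurableSpace α] {μ : Measure α}
    {K : α → Matrix X X ℝ} (hint : ∀ x y, Integrable (fun t ↦ K t x y) μ)
    (hK : ∀ᵐ t ∂μ, (K t).PosSemidef) :
    (Matrix.of fun x y ↦ ∫ t, K t x y ∂μ).PosSemidef := by
  refine posSemidef_iff_kernelForm_nonneg.2 ⟨?_, fun c ↦ ?_⟩
  · ext x y
    exact integral_congr_ae (hK.mono fun t ht ↦ ht.isHermitian.apply x y)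
  · rw [kernelForm_integral hint]
    exact integral_nonneg_of_ae
      (hK.mono fun t ht ↦ (posSemidef_iff_kernelForm_nonneg.1 ht).2 c)

theorem posSemidef_vecMulVec_self (f : X → ℝ) : (Matrix.vecMulVec f f).PosSemidef := by
  refine posSemidef_iff_kernelForm_nonneg.2 ⟨Matrix.ext fun x y ↦ mul_comm _ _, fun c ↦ ?_⟩
  rw [kernelForm_vecMulVec]
  exact mul_self_nonneg _

theorem posSemidef_gram {V : Type*} [SeminormedAddCommGroup V] [InnerProductSpace ℝ V]
    (v : X → V) : (Matrix.gram ℝ v).PosSemidef := by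
  refine posSemidef_iff_kernelForm_nonneg.2 ⟨Matrix.isHermitian_gram ℝ v, fun c ↦ ?_⟩
  rw [kernelForm_gram]
  exact real_inner_self_nonneg

theorem posSemidef_map_pow_s1 {K : Matrix X X ℝ} (hK : K.PosSemidef) (n : ℕ) :
    (K.map (· ^ n)).PosSemidef := by
  induction n with
  | zero =>
    have hone : K.map (· ^ 0) = Matrix.vecMulVec 1 1 := by ext; simp
    exact hone ▸ posSemidef_vecMulVec_self 1
  | succ n ih =>
    have hsucc : K.map (· ^ (n + 1)) = K.map (· ^ n) ⊙ K :=
      Matrix.ext fun x y ↦ pow_succ (K x y) n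
    rw [hsucc]
    exact ih.hadamard hK

theorem posSemidef_map_exp {K : Matrix X X ℝ} (hK : K.PosSemidef) :
    (K.map Real.exp).PosSemidef := by
  refine posSemidef_of_tendsto (l := atTop)
    (K := fun N : ℕ ↦ ∑ n ∈ Finset.range N, (n.factorial : ℝ)⁻¹ • K.map (· ^ n))
    (.of_forall fun N ↦ Matrix.posSemidef_sum _ fun n _ ↦
      (posSemidef_map_pow_s1 hK n).smul (by positivity))
    fun x y ↦ ?_
  simpa [Matrix.sum_apply, Real.exp_eq_exp_ℝ, div_eq_inv_mul] using
    (NormedSpace.expSeries_div_hasSum_exp (K x y)).tendsto_sum_nat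

end PosSemidef

/-- A real symmetric kernel is conditionally negative definite if its quadratic form is nonpositive
on coefficients of total mass zero (Schoenberg's condition). -/
structure IsCondNegDef {X : Type*} (ψ : Matrix X X ℝ) : Prop where
  isHermitian : ψ.IsHermitian
  nonpos_of_sum_eq_zero : ∀ c : X →₀ ℝ, (c.sum fun _ a ↦ a) = 0 → kernelForm ψ c c ≤ 0

namespace IsCondNegDef

variable {X : Type*} {ψ : Matrix X X ℝ}

theorem smul (hψ : IsCondNegDef ψ) {s : ℝ} (hs : 0 ≤ s) : IsCondNegDef (s • ψ) := by
  refine ⟨hψ.isHermitian.smul (IsSelfAdjoint.all s), fun c hc ↦ ?_⟩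
  rw [kernelForm_smul]
  exact mul_nonpos_of_nonneg_of_nonpos hs (hψ.nonpos_of_sum_eq_zero c hc)

theorem add_sub_of_posSemidef (f : X → ℝ) {K : Matrix X X ℝ} (hK : K.PosSemidef) :
    IsCondNegDef (.of fun x y ↦ f x + f y - K x y) := by
  obtain ⟨hsymm, hnonneg⟩ := posSemidef_iff_kernelForm_nonneg.1 hK
  have hdecomp : (.of fun x y ↦ f x + f y - K x y) =
      Matrix.vecMulVec f 1 + Matrix.vecMulVec 1 f - K := by
    ext; simp
  refine ⟨Matrix.ext fun x y ↦ ?_, fun c hc ↦ ?_⟩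
  · simp only [Matrix.conjTranspose_apply, Matrix.of_apply, star_trivial, ← hsymm.apply x y,
      add_comm (f x)]
  · simp only [hdecomp, kernelForm_sub, kernelForm_add, kernelForm_vecMulVec, Pi.one_apply, mul_one,
      hc, mul_zero, zero_mul, zero_add, zero_sub]
    exact neg_nonpos.2 (hnonneg c)

theorem integral {α : Type*} [MeasurableSpace α] {μ : Measure α}
    {K : α → Matrix X X ℝ} (hint : ∀ x y, Integrable (fun t ↦ K t x y) μ)
    (hK : ∀ᵐ t ∂μ, IsCondNegDef (K t)) :
    IsCondNegDef (.of fun x y ↦ ∫ t, K t x y ∂μ) := by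
  refine ⟨?_, fun c hc ↦ ?_⟩
  · ext x y
    exact integral_congr_ae (hK.mono fun t ht ↦ ht.isHermitian.apply x y)
  · rw [kernelForm_integral hint]
    exact integral_nonpos_of_ae (hK.mono fun t ht ↦ ht.nonpos_of_sum_eq_zero c hc)

theorem posSemidef_centered (hψ : IsCondNegDef ψ) (o : X) :
    (Matrix.of fun x y ↦ ψ x o + ψ o y - ψ x y - ψ o o).PosSemidef := by
  have hsymm : ∀ x y, ψ x y = ψ y x := fun x y ↦ hψ.isHermitian.apply y x
  refine posSemidef_iff_kernelForm_nonneg.2 ⟨Matrix.ext fun x y ↦ ?_, fun c ↦ ?_⟩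
  · simp only [Matrix.conjTranspose_apply, Matrix.of_apply, star_trivial, hsymm o, hsymm y x]
    ring
  set m : ℝ := c.sum fun _ a ↦ a with hm
  set r : ℝ := c.sum fun x a ↦ a * ψ x o with hr
  have hmass : ((c - Finsupp.single o m).sum fun _ a ↦ a) = 0 := by
    rw [Finsupp.sum_sub_index fun _ _ _ ↦ rfl, Finsupp.sum_single_index rfl, sub_self]
  have hdecomp : (Matrix.of fun x y ↦ ψ x o + ψ o y - ψ x y - ψ o o) =
      Matrix.vecMulVec (ψ · o) 1 + Matrix.vecMulVec 1 (ψ · o) - ψ -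
        ψ o o • Matrix.vecMulVec 1 1 := by
    ext x y
    simp [hsymm o y]
  have hcentered : kernelForm (.of fun x y ↦ ψ x o + ψ o y - ψ x y - ψ o o) c c =
      r * m + m * r - kernelForm ψ c c - ψ o o * (m * m) := by
    simp only [hdecomp, kernelForm_sub, kernelForm_add, kernelForm_smul, kernelForm_vecMulVec,
      Pi.one_apply, mul_one, hm, hr]
  have hshifted : kernelForm ψ (c - Finsupp.single o m) (c - Finsupp.single o m) =
      kernelForm ψ c c - 2 * (r * m) + ψ o o * (m * m) := by
    simp only [map_sub, LinearMap.sub_apply, kernelForm_comm hψ.isHermitian (Finsupp.single o m) c,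
      kernelForm_single_right, Finsupp.sum_single_index, zero_mul, ← hr]
    ring
  linarith [hψ.nonpos_of_sum_eq_zero _ hmass]

theorem posSemidef_exp_neg (hψ : IsCondNegDef ψ) :
    (ψ.map fun r ↦ Real.exp (-r)).PosSemidef := by
  rcases isEmpty_or_nonempty X with hX | ⟨⟨o⟩⟩
  · exact ⟨Matrix.ext fun x ↦ hX.elim x, fun c ↦ by simp [Subsingleton.elim c 0]⟩
  have hfactor : ψ.map (fun r ↦ Real.exp (-r)) =
      (Matrix.of fun x y ↦ ψ x o + ψ o y - ψ x y - ψ o o).map Real.exp ⊙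
        Matrix.vecMulVec (fun x ↦ Real.exp (ψ o o / 2 - ψ x o))
          (fun y ↦ Real.exp (ψ o o / 2 - ψ y o)) := by
    ext x y
    have hsymm : ψ o y = ψ y o := hψ.isHermitian.apply y o
    simp only [Matrix.map_apply, Matrix.hadamard_apply, Matrix.vecMulVec_apply,
      Matrix.of_apply, ← Real.exp_add]
    congr 1
    rw [hsymm]
    ring
  rw [hfactor]
  exact (posSemidef_map_exp (hψ.posSemidef_centered o)).hadamard (posSemidef_vecMulVec_self _)

theorem posSemidef_inv_const_add (hψ : IsCondNegDef ψ) (hψ0 : ∀ x y, 0 ≤ ψ x y) {t : ℝ}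
    (ht : 0 < t) : (ψ.map fun r ↦ (t + r)⁻¹).PosSemidef := by
  have hneg : ∀ x y, -(t + ψ x y) < 0 := fun x y ↦ by linarith [hψ0 x y]
  have hlaplace : ψ.map (fun r ↦ (t + r)⁻¹) =
      .of fun x y ↦ ∫ u in Ioi (0 : ℝ), Real.exp (-(t + ψ x y) * u) := by
    ext x y
    rw [Matrix.map_apply, Matrix.of_apply, integral_exp_mul_Ioi (hneg x y), mul_zero,
      Real.exp_zero, neg_div_neg_eq, one_div]
  rw [hlaplace]
  refine posSemidef_integral (K := fun u ↦ .of fun x y ↦ Real.exp (-(t + ψ x y) * u))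
    (fun x y ↦ integrableOn_exp_mul_Ioi (hneg x y) 0)
    (ae_restrict_of_forall_mem measurableSet_Ioi fun u hu ↦ ?_)
  have hsplit : (Matrix.of fun x y ↦ Real.exp (-(t + ψ x y) * u)) =
      Real.exp (-t * u) • (u • ψ).map fun r ↦ Real.exp (-r) := by
    ext x y
    simp only [Matrix.of_apply, Matrix.smul_apply, Matrix.map_apply, smul_eq_mul, ← Real.exp_add]
    ring_nf
  rw [hsplit]
  exact (hψ.smul (le_of_lt hu)).posSemidef_exp_neg.smul (Real.exp_nonneg _)

theorem rpow (hψ : IsCondNegDef ψ) (hψ0 : ∀ x y, 0 ≤ ψ x y) {p : ℝ} (hp : p ∈ Ioo 0 1) :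
    IsCondNegDef (ψ.map (· ^ p)) := by
  have hmixture : ψ.map (· ^ p) = (∫ t in Ioi 0, Real.rpowIntegrand₀₁ p t 1)⁻¹ •
      .of fun x y ↦ ∫ t in Ioi 0, Real.rpowIntegrand₀₁ p t (ψ x y) :=
    Matrix.ext fun x y ↦ Real.rpow_eq_const_mul_integral hp (hψ0 x y)
  rw [hmixture]
  refine (IsCondNegDef.integral (K := fun t ↦ .of fun x y ↦ Real.rpowIntegrand₀₁ p t (ψ x y))
    (fun x y ↦ Real.integrableOn_rpowIntegrand₀₁_Ioi hp (hψ0 x y))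
    (ae_restrict_of_forall_mem measurableSet_Ioi fun t ht ↦ ?_)).smul
    (inv_nonneg.2 (Real.integral_rpowIntegrand₀₁_one_pos hp).le)
  have hintegrand : (Matrix.of fun x y ↦ Real.rpowIntegrand₀₁ p t (ψ x y)) =
      t ^ p • .of fun x y ↦ t⁻¹ / 2 + t⁻¹ / 2 - ψ.map (fun r ↦ (t + r)⁻¹) x y := by
    ext x y
    simp [Real.rpowIntegrand₀₁]
  rw [hintegrand]
  exact (add_sub_of_posSemidef _ (hψ.posSemidef_inv_const_add hψ0 ht)).smul
    (Real.rpow_nonneg (le_of_lt ht) p)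

end IsCondNegDef

section Seminorm

variable {V : Type*} [SeminormedAddCommGroup V] [InnerProductSpace ℝ V]

theorem isCondNegDef_norm_sub_sq : IsCondNegDef (.of fun x y : V ↦ ‖x - y‖ ^ 2) := by
  have hpolar : (Matrix.of fun x y : V ↦ ‖x - y‖ ^ 2) =
      .of fun x y ↦ ‖x‖ ^ 2 + ‖y‖ ^ 2 - ((2 : ℝ) • Matrix.gram ℝ id) x y := by
    ext x y
    simp only [Matrix.of_apply, Matrix.smul_apply, Matrix.gram_apply, id, smul_eq_mul,
      norm_sub_sq_real]
    ring
  rw [hpolar]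
  exact .add_sub_of_posSemidef _ ((posSemidef_gram id).smul zero_le_two)

theorem isCondNegDef_norm_sub : IsCondNegDef (.of fun x y : V ↦ ‖x - y‖) := by
  convert isCondNegDef_norm_sub_sq.rpow (p := 1 / 2) (fun x y : V ↦ sq_nonneg ‖x - y‖)
    ⟨by norm_num, by norm_num⟩ using 1
  ext x y
  rw [Matrix.map_apply, Matrix.of_apply, Matrix.of_apply, ← Real.sqrt_eq_rpow,
    Real.sqrt_sq (norm_nonneg _)]

end Seminorm

section Norm

theorem not_differentiableAt_exp_neg_norm_sub {E : Type*} [NormedAddCommGroup E]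
    [NormedSpace ℝ E] [Nontrivial E] (x : E) :
    ¬ DifferentiableAt ℝ (fun y ↦ Real.exp (-‖x - y‖)) x := by
  intro hexp
  have hnorm : DifferentiableAt ℝ (fun y ↦ ‖x - y‖) x := by
    simpa using (hexp.log (Real.exp_ne_zero _)).neg
  refine not_differentiableAt_norm_zero E ?_
  have hcomp := DifferentiableAt.comp (0 : E) (f := fun z ↦ x - z) (by simpa using hnorm)
    (differentiableAt_id.const_sub x)
  simpa [Function.comp_def] using hcomp

variable (V : Type*) [NormedAddCommGroup V] [InnerProductSpace ℝ V]

theorem linearIndependent_exp_neg_norm_sub :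
    LinearIndependent ℝ fun x y : V ↦ Real.exp (-‖x - y‖) := by
  rcases subsingleton_or_nontrivial V with _ | _
  · exact .of_subsingleton 0 fun h ↦ Real.exp_ne_zero _ (congrFun h 0)
  refine linearIndependent_iff_notMem_span.2 fun x hx ↦ not_differentiableAt_exp_neg_norm_sub x ?_
  generalize (fun y ↦ Real.exp (-‖x - y‖)) = f at hx
  induction hx using Submodule.span_induction with
  | mem f hf =>
    obtain ⟨z, ⟨-, hzx⟩, rfl⟩ := hf
    exact (((differentiableAt_id.const_sub z).norm ℝ (sub_ne_zero.2 hzx)).neg).exp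
  | zero => exact differentiableAt_const 0
  | add f g _ _ hf hg => exact hf.add hg
  | smul a f _ hf => exact hf.const_smul a

theorem posDef_exp_neg_norm_sub : (Matrix.of fun x y : V ↦ Real.exp (-‖x - y‖)).PosDef :=
  posDef_of_posSemidef_of_linearIndependent isCondNegDef_norm_sub.posSemidef_exp_neg
    (linearIndependent_exp_neg_norm_sub V)

end Norm

theorem euclidean_embedded_finite_metric_space_posDef_general
    (X : Type*) {V : Type*} [NormedAddCommGroup V] [InnerProductSpace ℝ V] (Φ : X → V)
    (hΦ : Function.Injective Φ)
    (d : X → X → ℝ) (hd : ∀ x y, d x y = ‖Φ x - Φ y‖) :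
    (Matrix.of fun x y : X ↦ Real.exp (-(d x y))).PosDef := by
  simp only [hd]
  exact (posDef_exp_neg_norm_sub V).submatrix hΦ

/-- If `X` is a finite set, `Φ : X → ℝ^N` is injective, and
`d x y = ‖Φ x - Φ y‖`, then the finite metric space `(X, d)` is positive definite:
its similarity matrix `ζ_X (x, y) = exp (-(d x y))` is a positive definite matrix. -/
theorem euclidean_embedded_finite_metric_space_posDef
    (X : Type*) [Fintype X] (N : ℕ) (Φ : X → EuclideanSpace ℝ (Fin N))
    (hΦ : Function.Injective Φ)
    (d : X → X → ℝ) (hd : ∀ x y, d x y = ‖Φ x - Φ y‖) :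
    (Matrix.of fun x y : X => Real.exp (-(d x y))).PosDef :=
  euclidean_embedded_finite_metric_space_posDef_general X Φ hΦ d hd
end

section
/- Let (X,d) be a positive definite finite metric space with |X| = n ≥ 1. Then Mag(X) = sup over nonzero v ∈ ℝⁿ of ( Σᵢ vᵢ )² / ( vᵀ ζ_X v ), where the supremum is attained (for instance at the weighting vector w = ζ_X⁻¹ 𝟙). -/
open Matrix

/-!
If `A` is positive definite and `A w = b`, then `bᵀ v = wᵀ A v`, so the Cauchy–Schwarz inequality
for the inner product `⟨u, v⟩ = uᵀ A v` reads `(bᵀ v)² ≤ (bᵀ w) (vᵀ A v)`, with equality at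
`v = w`. Hence the maximum of `(bᵀ v)² / (vᵀ A v)` is `bᵀ w = bᵀ A⁻¹ b`. The magnitude is the case
`A = ζ_X`, `b = 𝟙`, where `w` is the weighting.
-/

section CauchySchwarz

variable {X R : Type*} [Fintype X] [CommRing R] [LinearOrder R] [IsStrictOrderedRing R]
  [StarRing R] [TrivialStar R] {A : Matrix X X R}

theorem sq_dotProduct_mulVec_le_of_posSemidef (hA : A.PosSemidef) (v w : X → R) :
    (v ⬝ᵥ A *ᵥ w) ^ 2 ≤ (v ⬝ᵥ A *ᵥ v) * (w ⬝ᵥ A *ᵥ w) := by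
  classical
  have symm : LinearMap.IsSymm A.toBilin' := LinearMap.BilinForm.isSymm_iff.mp <|
    isSymm_toBilin'_iff_isSymm.mpr (isHermitian_iff_isSymm.mp hA.isHermitian)
  have nonneg (u : X → R) : 0 ≤ A.toBilin' u u := by
    simpa only [toBilin'_apply', star_trivial] using hA.dotProduct_mulVec_nonneg u
  simpa only [toBilin'_apply'] using LinearMap.BilinForm.apply_sq_le_of_symm _ nonneg symm v w

theorem sq_dotProduct_le_of_mulVec_eq {b w : X → R} (hA : A.PosSemidef) (hw : A *ᵥ w = b)
    (v : X → R) : (b ⬝ᵥ v) ^ 2 ≤ (b ⬝ᵥ w) * (v ⬝ᵥ A *ᵥ v) :=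
  calc (b ⬝ᵥ v) ^ 2 = (v ⬝ᵥ A *ᵥ w) ^ 2 := by rw [hw, dotProduct_comm]
    _ ≤ (v ⬝ᵥ A *ᵥ v) * (w ⬝ᵥ A *ᵥ w) := sq_dotProduct_mulVec_le_of_posSemidef hA v w
    _ = (b ⬝ᵥ w) * (v ⬝ᵥ A *ᵥ v) := by rw [hw, dotProduct_comm w, mul_comm]

end CauchySchwarz

theorem sq_dotProduct_div_eq_of_mulVec_eq {X K : Type*} [Fintype X] [Semifield K]
    {A : Matrix X X K} {b w : X → K} (hw : A *ᵥ w = b) :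
    (b ⬝ᵥ w) ^ 2 / (w ⬝ᵥ A *ᵥ w) = b ⬝ᵥ w := by
  rw [hw, dotProduct_comm w, sq, mul_self_div_self]

theorem mulVec_inv_mulVec_of_isUnit {X R : Type*} [Fintype X] [DecidableEq X] [CommRing R]
    {A : Matrix X X R} (hA : IsUnit A) (b : X → R) : A *ᵥ (A⁻¹ *ᵥ b) = b := by
  rw [mulVec_mulVec, mul_nonsing_inv A ((isUnit_iff_isUnit_det A).mp hA), one_mulVec]

theorem sum_sum_eq_one_dotProduct_mulVec_one {X Y R : Type*} [Fintype X] [Fintype Y]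
    [NonAssocSemiring R] (A : Matrix X Y R) : ∑ x, ∑ y, A x y = 1 ⬝ᵥ A *ᵥ 1 := by
  simp only [one_dotProduct, mulVec, dotProduct_one]

theorem magnitude_isGreatest_rayleigh_general
    {X K : Type*} [Fintype X] [DecidableEq X] [Field K] [LinearOrder K] [IsStrictOrderedRing K]
    [StarRing K] [TrivialStar K] {A : Matrix X X K} (hA : A.PosDef) {b : X → K} (hb : b ≠ 0) :
    IsGreatest {r : K | ∃ v : X → K, v ≠ 0 ∧ r = (b ⬝ᵥ v) ^ 2 / (v ⬝ᵥ A *ᵥ v)}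
      (b ⬝ᵥ A⁻¹ *ᵥ b) := by
  have hw : A *ᵥ (A⁻¹ *ᵥ b) = b := mulVec_inv_mulVec_of_isUnit hA.isUnit b
  constructor
  · have w_ne_zero : A⁻¹ *ᵥ b ≠ 0 := by
      intro h
      exact hb (by rw [← hw, h, mulVec_zero])
    exact ⟨A⁻¹ *ᵥ b, w_ne_zero, (sq_dotProduct_div_eq_of_mulVec_eq hw).symm⟩
  · rintro _ ⟨v, hv, rfl⟩
    have quadratic_pos : 0 < v ⬝ᵥ A *ᵥ v := by
      simpa only [star_trivial] using hA.dotProduct_mulVec_pos hv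
    exact (div_le_iff₀ quadratic_pos).mpr (sq_dotProduct_le_of_mulVec_eq hA.posSemidef hw v)

/-- For a positive definite finite metric space `(X, d)` with `|X| ≥ 1`,
the magnitude `Mag X = ∑ x y, ζ_X⁻¹ x y` is the supremum over nonzero `v` of
`(∑ x, v x)² / (vᵀ ζ_X v)`, and this supremum is attained (e.g. at `w = ζ_X⁻¹ 𝟙`),
i.e. `Mag X` is the greatest element of the set of such quotient values. -/
theorem magnitude_isGreatest_rayleigh
    {X : Type*} [Fintype X] [DecidableEq X] [Nonempty X] [MetricSpace X]
    (ζ : Matrix X X ℝ) (hζdef : ζ = Matrix.of fun x y => Real.exp (-dist x y))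
    (hζ : ζ.PosDef) :
    IsGreatest {r : ℝ | ∃ v : X → ℝ, v ≠ 0 ∧ r = (∑ x, v x) ^ 2 / (v ⬝ᵥ ζ.mulVec v)}
      (∑ x, ∑ y, ζ⁻¹ x y) := by
  simpa only [one_dotProduct, sum_sum_eq_one_dotProduct_mulVec_one] using
    magnitude_isGreatest_rayleigh_general hζ one_ne_zero
end

section
/- Let (X,d) be a nonempty positive definite finite metric space. Then Mag(X) > 0, i.e. the sum of all entries of ζ_X⁻¹ is strictly positive. -/
open Matrix

theorem one_dotProduct_mulVec_one {m n R : Type*} [Fintype m] [Fintype n]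
    [NonAssocSemiring R] (A : Matrix m n R) : 1 ⬝ᵥ A *ᵥ 1 = ∑ i, ∑ j, A i j := by
  simp only [one_dotProduct, mulVec, dotProduct_one]

theorem sum_sum_pos_of_posDef {n R : Type*} [Fintype n] [Nonempty n]
    [Ring R] [Nontrivial R] [PartialOrder R] [StarRing R] {A : Matrix n n R} (hA : A.PosDef) :
    0 < ∑ i, ∑ j, A i j := by
  have quadratic_form_pos : 0 < star (1 : n → R) ⬝ᵥ A *ᵥ 1 := hA.dotProduct_mulVec_pos one_ne_zero
  rwa [star_one, one_dotProduct_mulVec_one] at quadratic_form_pos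

theorem magnitude_pos_general {n K : Type*} [Fintype n] [DecidableEq n] [Nonempty n]
    [Field K] [PartialOrder K] [StarRing K] {ζ : Matrix n n K} (hζ : ζ.PosDef) :
    0 < ∑ i, ∑ j, ζ⁻¹ i j :=
  sum_sum_pos_of_posDef hζ.inv

/-- For a nonempty positive definite finite metric space `(X, d)`,
the magnitude `Mag X = ∑ x y, ζ_X⁻¹ x y` is strictly positive. -/
theorem magnitude_pos
    {X : Type*} [Fintype X] [DecidableEq X] [Nonempty X] [MetricSpace X]
    (hζ : (Matrix.of fun x y : X => Real.exp (-dist x y)).PosDef) :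
    0 < ∑ x, ∑ y, (Matrix.of fun x y : X => Real.exp (-dist x y))⁻¹ x y :=
  magnitude_pos_general hζ
end

section
/- Let (X,d) be a positive definite finite metric space and let Y ⊆ X be a nonempty subset endowed with the induced metric (so that (Y, d|_Y) is also positive definite, as a principal submatrix of a positive definite matrix is positive definite). Then Mag(Y) ≤ Mag(X). -/
/-!
Compressing the form of a positive definite matrix `A` along `P` and inverting gives
`Q = P (Pᴴ A P)⁻¹ Pᴴ`, and `Q ≤ A⁻¹` in the Loewner order: since `Q A Q = Q`, the difference
`D = A⁻¹ - Q` satisfies `D = Dᴴ A D`. When `P` is the inclusion of the coordinates in a subset,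
`Pᴴ A P` is the corresponding principal submatrix, and evaluating both forms at the constant vector
`1` compares the two magnitudes.
-/

open Matrix

section Compression

variable {m n R : Type*} [Fintype m] [DecidableEq m] [Fintype n] [DecidableEq n]
  [CommRing R] [PartialOrder R] [StarRing R]

theorem posSemidef_inv_sub_mul_inv_mul_conjTranspose {A : Matrix n n R} {P : Matrix n m R}
    (hA : A.PosSemidef) (hA_unit : IsUnit A.det) (hB_unit : IsUnit (Pᴴ * A * P).det) :
    (A⁻¹ - P * (Pᴴ * A * P)⁻¹ * Pᴴ).PosSemidef := by
  set B := Pᴴ * A * P with hB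
  set Q := P * B⁻¹ * Pᴴ with hQ
  have hQ_herm : Qᴴ = Q :=
    isHermitian_mul_mul_conjTranspose P (isHermitian_conjTranspose_mul_mul P hA.isHermitian).inv
  have hQAQ : Q * A * Q = Q :=
    calc Q * A * Q = P * (B⁻¹ * B * B⁻¹) * Pᴴ := by simp only [hQ, hB, Matrix.mul_assoc]
      _ = Q := by rw [nonsing_inv_mul B hB_unit, Matrix.one_mul]
  have hD : (A⁻¹ - Q)ᴴ * A * (A⁻¹ - Q) = A⁻¹ - Q := by
    rw [conjTranspose_sub, hA.isHermitian.inv.eq, hQ_herm, Matrix.sub_mul, Matrix.mul_sub,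
      Matrix.sub_mul, Matrix.sub_mul, nonsing_inv_mul A hA_unit,
      mul_nonsing_inv_cancel_right A Q hA_unit, hQAQ, Matrix.one_mul, Matrix.one_mul]
    abel
  exact hD ▸ hA.conjTranspose_mul_mul_same (A⁻¹ - Q)

theorem dotProduct_inv_compression_mulVec_le [IsOrderedAddMonoid R] {A : Matrix n n R}
    {P : Matrix n m R} (hA : A.PosSemidef) (hA_unit : IsUnit A.det)
    (hB_unit : IsUnit (Pᴴ * A * P).det) (v : n → R) :
    star (Pᴴ *ᵥ v) ⬝ᵥ (Pᴴ * A * P)⁻¹ *ᵥ (Pᴴ *ᵥ v) ≤ star v ⬝ᵥ A⁻¹ *ᵥ v := by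
  have h := (posSemidef_inv_sub_mul_inv_mul_conjTranspose hA hA_unit hB_unit)
    |>.dotProduct_mulVec_nonneg v
  rw [sub_mulVec, dotProduct_sub, sub_nonneg] at h
  simpa only [star_mulVec, conjTranspose_conjTranspose, mulVec_mulVec, ← dotProduct_mulVec,
    Matrix.mul_assoc] using h

end Compression

section Submatrix

variable {m n R : Type*} [Fintype n] [DecidableEq n] [CommRing R] [StarRing R]

theorem conjTranspose_one_submatrix_mulVec (e : m → n) (v : n → R) :
    ((1 : Matrix n n R).submatrix id e)ᴴ *ᵥ v = v ∘ e := by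
  ext i
  simp [mulVec, dotProduct, one_apply, apply_ite star]

theorem conjTranspose_one_submatrix_mul_mul_one_submatrix (e : m → n) (A : Matrix n n R) :
    ((1 : Matrix n n R).submatrix id e)ᴴ * A * (1 : Matrix n n R).submatrix id e =
      A.submatrix e e := by
  ext i j
  simp [mul_apply, one_apply]

variable {K : Type*} [Field K] [PartialOrder K] [StarRing K] [IsOrderedAddMonoid K]

theorem dotProduct_inv_submatrix_mulVec_le [Fintype m] [DecidableEq m] {A : Matrix n n K}
    (hA : A.PosDef) {e : m → n} (he : Function.Injective e) (v : n → K) :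
    star (v ∘ e) ⬝ᵥ (A.submatrix e e)⁻¹ *ᵥ (v ∘ e) ≤ star v ⬝ᵥ A⁻¹ *ᵥ v := by
  have hA_unit : IsUnit A.det := (isUnit_iff_isUnit_det A).1 hA.isUnit
  have hB_unit : IsUnit (A.submatrix e e).det :=
    (isUnit_iff_isUnit_det _).1 (hA.submatrix he).isUnit
  rw [← conjTranspose_one_submatrix_mul_mul_one_submatrix] at hB_unit ⊢
  rw [← conjTranspose_one_submatrix_mulVec]
  exact dotProduct_inv_compression_mulVec_le hA.posSemidef hA_unit hB_unit v

end Submatrix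

section Magnitude

variable {m n R : Type*} [Fintype m] [DecidableEq m] [Fintype n] [DecidableEq n]

/-- The magnitude of an invertible square matrix, so that the magnitude of a finite metric space is
that of its similarity matrix `exp (-d(x, y))`. A singular matrix gets the junk value `0`. -/
noncomputable def magnitude [CommRing R] (A : Matrix n n R) : R :=
  ∑ x, ∑ y, A⁻¹ x y

theorem magnitude_eq_star_one_dotProduct [CommRing R] [StarRing R] (A : Matrix n n R) :
    magnitude A = star 1 ⬝ᵥ A⁻¹ *ᵥ 1 := by
  simp only [magnitude, star_one, one_dotProduct, mulVec, dotProduct_one]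

theorem magnitude_monotone_subset_general {K : Type*} [Field K] [PartialOrder K] [StarRing K]
    [IsOrderedAddMonoid K] {A : Matrix n n K} (hA : A.PosDef) {e : m → n}
    (he : Function.Injective e) : magnitude (A.submatrix e e) ≤ magnitude A := by
  simpa only [magnitude_eq_star_one_dotProduct, Pi.one_comp] using
    dotProduct_inv_submatrix_mulVec_le hA he 1

end Magnitude

/-- For a positive definite finite metric space `(X, d)` and a nonempty
subset `Y ⊆ X` with the induced metric, `Mag Y ≤ Mag X`. -/
theorem magnitude_monotone_subset
    {X : Type*} [Fintype X] [DecidableEq X] [MetricSpace X]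
    (hX : (Matrix.of fun x y : X => Real.exp (-dist x y)).PosDef)
    (s : Finset X) (hs : s.Nonempty) :
    ∑ x : ↥s, ∑ y : ↥s, (Matrix.of fun x y : ↥s => Real.exp (-dist x y))⁻¹ x y ≤
      ∑ x, ∑ y, (Matrix.of fun x y : X => Real.exp (-dist x y))⁻¹ x y :=
  magnitude_monotone_subset_general hX (e := ((↑) : s → X)) Subtype.val_injective
end

section
/- Let (X,d) be a nonempty positive definite finite metric space. Then Sp(X) ≤ Mag(X), i.e. Σ_{x∈X} 1/(Σ_{y∈X} exp(−d(x,y))) ≤ Σ_{x,y∈X} ζ_X⁻¹(x,y). -/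
/-!
The diagonal matrix `D` of row sums of a symmetric matrix `Z` with nonnegative entries dominates `Z`
in the Loewner order, because `D - Z` is the Laplacian of the graph with edge weights `Z`. When `Z`
is positive definite, inversion reverses this to `D⁻¹ ≤ Z⁻¹`. The spread is the sum of all entries
of `D⁻¹` and the magnitude is that of `Z⁻¹`, so the inequality is the quadratic form of
`Z⁻¹ - D⁻¹` evaluated at the all-ones vector.
-/

section

open Finset Matrix

variable {n R K : Type*} [Fintype n]

/-- The Laplacian of the complete graph on `n` with weight `A i j` on the edge from `i` to `j`.
The weights of loops cancel, so the diagonal of `A` is irrelevant. -/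
def weightedLaplacian [DecidableEq n] [AddCommGroup R] (A : Matrix n n R) : Matrix n n R :=
  diagonal (fun i => ∑ j, A i j) - A

section Laplacian

variable [DecidableEq n] [CommRing R] {A : Matrix n n R}

theorem two_mul_dotProduct_weightedLaplacian_mulVec (hA : A.IsSymm) (x : n → R) :
    2 * (x ⬝ᵥ weightedLaplacian A *ᵥ x) = ∑ i, ∑ j, A i j * (x i - x j) ^ 2 := by
  have quadratic_form : x ⬝ᵥ weightedLaplacian A *ᵥ x =
      ∑ i, ∑ j, A i j * (x i ^ 2 - x i * x j) := by
    rw [weightedLaplacian, sub_mulVec, dotProduct_sub, dot_mulVec_eq_sum_sum x A, sum_comm]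
    simp_rw [dotProduct, mulVec_diagonal, sum_mul, mul_sum, ← sum_sub_distrib]
    exact sum_congr rfl fun i _ => sum_congr rfl fun j _ => by ring
  have swapped : ∑ i, ∑ j, A i j * (x i ^ 2 - x i * x j) =
      ∑ i, ∑ j, A i j * (x j ^ 2 - x j * x i) := by
    rw [sum_comm]
    simp only [hA.apply]
  rw [two_mul, quadratic_form]
  nth_rw 2 [swapped]
  simp only [← sum_add_distrib]
  exact sum_congr rfl fun i _ => sum_congr rfl fun j _ => by ring

theorem posSemidef_weightedLaplacian [LinearOrder R] [IsStrictOrderedRing R] [StarRing R]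
    [TrivialStar R] (hA : A.IsSymm) (hA₀ : ∀ i j, 0 ≤ A i j) :
    (weightedLaplacian A).PosSemidef := by
  refine .of_dotProduct_mulVec_nonneg ?_ fun x => ?_
  · rw [IsHermitian, conjTranspose_eq_transpose_of_trivial]
    exact (isSymm_diagonal _).sub hA
  · rw [star_trivial, ← mul_nonneg_iff_of_pos_left (zero_lt_two' R),
      two_mul_dotProduct_weightedLaplacian_mulVec hA]
    exact sum_nonneg fun i _ => sum_nonneg fun j _ => mul_nonneg (hA₀ i j) (sq_nonneg _)

end Laplacian

-- Written so that both summands are visibly congruences of positive semidefinite matrices when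
-- `A` is positive definite and `C` positive semidefinite.
theorem inv_sub_inv_add [DecidableEq n] [CommRing R] {A C : Matrix n n R} (hA : IsUnit A)
    (hAC : IsUnit (A + C)) :
    A⁻¹ - (A + C)⁻¹ = (A + C)⁻¹ * C * (A + C)⁻¹ + (A + C)⁻¹ * (C * A⁻¹ * C) * (A + C)⁻¹ := by
  rw [isUnit_iff_isUnit_det] at hA hAC
  set B := A + C with hB
  have hC : C = B - A := by rw [hB, add_sub_cancel_left]
  calc
    A⁻¹ - B⁻¹ = B⁻¹ * C * A⁻¹ := by
      rw [hC, mul_sub, nonsing_inv_mul B hAC, sub_mul, one_mul, mul_nonsing_inv_cancel_right _ _ hA]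
    _ = B⁻¹ * C * A⁻¹ * (A + C) * B⁻¹ := by rw [← hB, mul_nonsing_inv_cancel_right _ _ hAC]
    _ = B⁻¹ * C * B⁻¹ + B⁻¹ * (C * A⁻¹ * C) * B⁻¹ := by
      rw [mul_add, nonsing_inv_mul_cancel_right _ _ hA, add_mul]
      simp only [mul_assoc]

theorem posSemidef_inv_sub_inv_add [DecidableEq n] [Field K] [PartialOrder K] [StarRing K]
    [AddLeftMono K] {A C : Matrix n n K} (hA : A.PosDef) (hC : C.PosSemidef) :
    (A⁻¹ - (A + C)⁻¹).PosSemidef := by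
  have hAC : (A + C).PosDef := hA.add_posSemidef hC
  have conj_AC {M : Matrix n n K} (hM : M.PosSemidef) :
      ((A + C)⁻¹ * M * (A + C)⁻¹).PosSemidef := by
    simpa only [hAC.inv.isHermitian.eq] using hM.conjTranspose_mul_mul_same (A + C)⁻¹
  have hCAC : (C * A⁻¹ * C).PosSemidef := by
    simpa only [hC.isHermitian.eq] using hA.inv.posSemidef.conjTranspose_mul_mul_same C
  rw [inv_sub_inv_add hA.isUnit hAC.isUnit]
  exact (conj_AC hC).add (conj_AC hCAC)

theorem sum_entries_nonneg_of_posSemidef [Ring R] [PartialOrder R] [StarRing R]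
    {M : Matrix n n R} (hM : M.PosSemidef) : 0 ≤ ∑ i, ∑ j, M i j := by
  simpa [dotProduct, mulVec] using hM.dotProduct_mulVec_nonneg 1

theorem sum_entries_inv_diagonal [DecidableEq n] [Field K] {d : n → K} (hd : ∀ i, d i ≠ 0) :
    ∑ i, ∑ j, (diagonal d)⁻¹ i j = ∑ i, 1 / d i := by
  have inv_eq : (diagonal d)⁻¹ = diagonal fun i => 1 / d i :=
    inv_eq_right_inv <| by simp [diagonal_mul_diagonal, hd]
  simp [inv_eq, diagonal_apply]

theorem spread_le_magnitude_general [DecidableEq n] [Field K] [LinearOrder K]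
    [IsStrictOrderedRing K] [StarRing K] [TrivialStar K] {Z : Matrix n n K} (hZ : Z.PosDef)
    (hZ₀ : ∀ i j, 0 ≤ Z i j) :
    ∑ i, 1 / ∑ j, Z i j ≤ ∑ i, ∑ j, Z⁻¹ i j := by
  have hZsymm : Z.IsSymm := by
    rw [IsSymm, ← conjTranspose_eq_transpose_of_trivial, hZ.isHermitian]
  have hL : (weightedLaplacian Z).PosSemidef := posSemidef_weightedLaplacian hZsymm hZ₀
  have hD : Z + weightedLaplacian Z = diagonal fun i => ∑ j, Z i j := add_sub_cancel _ _
  have rowSum_pos (i : n) : 0 < ∑ j, Z i j := by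
    have hDpos := hZ.add_posSemidef hL
    rw [hD] at hDpos
    simpa only [diagonal_apply_eq] using hDpos.diag_pos (i := i)
  have entries_nonneg := sum_entries_nonneg_of_posSemidef (posSemidef_inv_sub_inv_add hZ hL)
  simp only [hD, Matrix.sub_apply, sum_sub_distrib] at entries_nonneg
  rwa [sum_entries_inv_diagonal fun i => (rowSum_pos i).ne', sub_nonneg] at entries_nonneg

end

/-- For a nonempty positive definite finite metric space `(X, d)`,
the spread is bounded above by the magnitude:
`∑ x, 1 / (∑ y, exp (-dist x y)) ≤ ∑ x y, ζ_X⁻¹ x y`. -/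
theorem spread_le_magnitude
    {X : Type*} [Fintype X] [DecidableEq X] [Nonempty X] [MetricSpace X]
    (hζ : (Matrix.of fun x y : X => Real.exp (-dist x y)).PosDef) :
    ∑ x : X, 1 / (∑ y : X, Real.exp (-dist x y)) ≤
      ∑ x, ∑ y, (Matrix.of fun x y : X => Real.exp (-dist x y))⁻¹ x y :=
  spread_le_magnitude_general hζ fun _ _ => (Real.exp_pos _).le
end

section
/- Let (X,d) be a nonempty finite metric space that is homogeneous, i.e. for any two points x, x' ∈ X there exists a bijective self-isometry of (X,d) sending x to x', and suppose the similarity matrix ζ_X is invertible. Then Mag(X) = Sp(X), and moreover both are equal to |X| / (Σ_{y∈X} exp(−d(x₀,y))) for any fixed point x₀ ∈ X. -/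
/-!
If all row sums of an invertible matrix `Z` equal `s`, then the all-ones vector is an eigenvector
of `Z` with eigenvalue `s`, hence of `Z⁻¹` with eigenvalue `s⁻¹`; so every row sum of `Z⁻¹` is the
inverse of the corresponding row sum of `Z`. In a homogeneous space an isometry taking `x` to `x'`
permutes the terms of row `x` of the similarity matrix into those of row `x'`.
-/

section

open Matrix

variable {X K : Type*} [Fintype X]

/-- The magnitude of an invertible square matrix. The magnitude of a finite metric space is that of
its similarity matrix. For a singular matrix this is the junk value `0`, as `Z⁻¹ = 0`. -/
noncomputable def matrixMagnitude [DecidableEq X] [CommRing K] (Z : Matrix X X K) : K :=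
  ∑ x, ∑ y, Z⁻¹ x y

/-- The spread of a square matrix, so that the spread of a finite metric space is that of its
similarity matrix. A row with sum `0` contributes `0`. -/
def matrixSpread [DivisionRing K] (Z : Matrix X X K) : K :=
  ∑ x, 1 / ∑ y, Z x y

theorem inv_mulVec_of_mulVec_eq_smul [DecidableEq X] [Field K] {Z : Matrix X X K} {v : X → K}
    {s : K} (hZ : IsUnit Z.det) (hv : Z *ᵥ v = s • v) : Z⁻¹ *ᵥ v = s⁻¹ • v := by
  have v_eq : v = s • Z⁻¹ *ᵥ v := by
    rw [← mulVec_smul, ← hv, mulVec_mulVec, nonsing_inv_mul Z hZ, one_mulVec]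
  obtain rfl | hs := eq_or_ne s 0
  · have v_zero : v = 0 := by rwa [zero_smul] at v_eq
    rw [v_zero, mulVec_zero, smul_zero]
  · rwa [eq_inv_smul_iff₀ hs, eq_comm]

theorem sum_inv_row_eq_one_div [DecidableEq X] [Field K] {Z : Matrix X X K}
    (hrow : ∀ x x', ∑ y, Z x y = ∑ y, Z x' y) (hZ : IsUnit Z.det) (x : X) :
    ∑ y, Z⁻¹ x y = 1 / ∑ y, Z x y := by
  have ones_eigenvector : Z *ᵥ 1 = (∑ y, Z x y) • (1 : X → K) := by
    ext x'
    simpa [mulVec, dotProduct] using hrow x' x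
  simpa [mulVec, dotProduct] using congrFun (inv_mulVec_of_mulVec_eq_smul hZ ones_eigenvector) x

theorem matrixSpread_eq_card_div [DivisionRing K] {Z : Matrix X X K}
    (hrow : ∀ x x', ∑ y, Z x y = ∑ y, Z x' y) (x₀ : X) :
    matrixSpread Z = (Fintype.card X : K) / ∑ y, Z x₀ y := by
  simp [matrixSpread, hrow _ x₀, div_eq_mul_inv]

theorem magnitude_eq_spread_of_homogeneous_general [DecidableEq X] [Field K] {Z : Matrix X X K}
    (hrow : ∀ x x', ∑ y, Z x y = ∑ y, Z x' y) (hZ : IsUnit Z.det) :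
    matrixMagnitude Z = matrixSpread Z ∧
      ∀ x₀, matrixMagnitude Z = (Fintype.card X : K) / ∑ y, Z x₀ y := by
  have mag_eq_spread : matrixMagnitude Z = matrixSpread Z :=
    Finset.sum_congr rfl fun x _ => sum_inv_row_eq_one_div hrow hZ x
  exact ⟨mag_eq_spread, fun x₀ => mag_eq_spread.trans (matrixSpread_eq_card_div hrow x₀)⟩

theorem sum_row_eq_of_transitive {α M : Type*} [AddCommMonoid M] {d : X → X → α}
    (hd : ∀ x x', ∃ g : X ≃ X, (∀ a b, d (g a) (g b) = d a b) ∧ g x = x') (f : α → M) (x x' : X) :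
    ∑ y, f (d x y) = ∑ y, f (d x' y) := by
  obtain ⟨g, hg, rfl⟩ := hd x x'
  calc ∑ y, f (d x y) = ∑ y, f (d (g x) (g y)) := by simp only [hg]
    _ = ∑ y, f (d (g x) y) := Equiv.sum_comp g fun y => f (d (g x) y)

end

/-- For a nonempty homogeneous finite metric space `(X, d)` (any point can
be sent to any other by a bijective self-isometry) whose similarity matrix is invertible,
magnitude and spread coincide, and both equal `|X| / (∑ y, exp (-dist x₀ y))` for any
fixed `x₀ ∈ X`. -/
theorem magnitude_eq_spread_of_homogeneous
    {X : Type*} [Fintype X] [DecidableEq X] [Nonempty X] [MetricSpace X]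
    (hhom : ∀ x x' : X, ∃ g : X ≃ X, (∀ a b, dist (g a) (g b) = dist a b) ∧ g x = x')
    (hinv : IsUnit (Matrix.of fun x y : X => Real.exp (-dist x y)).det) :
    (∑ x, ∑ y, (Matrix.of fun x y : X => Real.exp (-dist x y))⁻¹ x y =
      ∑ x : X, 1 / (∑ y : X, Real.exp (-dist x y))) ∧
    ∀ x₀ : X, ∑ x, ∑ y, (Matrix.of fun x y : X => Real.exp (-dist x y))⁻¹ x y =
      (Fintype.card X : ℝ) / (∑ y : X, Real.exp (-dist x₀ y)) := by
  exact magnitude_eq_spread_of_homogeneous_general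
    (sum_row_eq_of_transitive hhom fun r => Real.exp (-r)) hinv
end
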